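/- Let m be a positive integer, n ≥ 1, c > 0, and 1 ≤ p ≤ ∞. Define G_t(x) = t^{-n/(2m)} exp( -c |x|^{2m/(2m-1)} / t^{1/(2m-1)} ) for t > 0, x ∈ ℝⁿ. Then there exists a constant C > 0, depending only on n, m, c and p, such that for every t > 0: Σ_{k∈ℤⁿ} ‖G_t‖_{L^p(C(k))} ≤ C ( 1 + t^{-(n/(2m))(1 - 1/p)} ). -/

import Mathlib

open Real MeasureTheory ENNReal

/-- The Gaussian-type profile `G_t(x) = t^{-n/(2m)} exp(-c |x|^{2m/(2m-1)} / t^{1/(2m-1)})`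
bounding the heat kernel of `(-Δ)^m`. -/
noncomputable def Gprof (n m : ℕ) (c : ℝ) (t : ℝ) (x : EuclideanSpace ℝ (Fin n)) : ℝ :=
  t ^ (-(n : ℝ) / (2 * (m : ℝ))) *
    Real.exp (-c * ‖x‖ ^ ((2 * (m : ℝ)) / (2 * (m : ℝ) - 1)) / t ^ (1 / (2 * (m : ℝ) - 1)))

/-- The unit cube `C(k)` in `ℝⁿ` centered at `k ∈ ℤⁿ`. -/
def unitCube (n : ℕ) (k : Fin n → ℤ) : Set (EuclideanSpace ℝ (Fin n)) :=
  {x | ∀ i, |x i - (k i : ℝ)| ≤ 1 / 2}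

lemma aux_pt (n m : ℕ) (hm : 1 ≤ m) (c : ℝ) (hc : 0 < c) (t : ℝ) (ht : 0 < t)
    (x : EuclideanSpace ℝ (Fin n)) :
    Gprof n m c t x ≤ (t ^ ((n : ℝ) / (2 * (m : ℝ))))⁻¹ * (Real.exp c *
      Real.exp (-c * (‖x‖ / t ^ (1 / (2 * (m : ℝ)))))) := by
  have hm' : (1 : ℝ) ≤ m := by exact_mod_cast hm
  unfold Gprof
  rw [neg_div, Real.rpow_neg ht.le, ← Real.exp_add]
  have hs : 0 < t ^ (1 / (2 * (m : ℝ))) := Real.rpow_pos_of_pos ht _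
  set s := t ^ (1 / (2 * (m : ℝ))) with hsdef
  have h1 : t ^ (1 / (2 * (m : ℝ) - 1)) = s ^ ((2 * (m : ℝ)) / (2 * (m : ℝ) - 1)) := by
    rw [hsdef, ← Real.rpow_mul ht.le]
    congr 1
    have : (2 * (m : ℝ) - 1) ≠ 0 := by linarith
    field_simp
  have ha : 1 ≤ (2 * (m : ℝ)) / (2 * (m : ℝ) - 1) := by
    rw [le_div_iff₀ (by linarith)]; linarith
  rw [h1, mul_div_assoc, ← Real.div_rpow (norm_nonneg _) hs.le]
  have hr : 0 ≤ ‖x‖ / s := by positivity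
  have key : ‖x‖ / s - 1 ≤ (‖x‖ / s) ^ ((2 * (m : ℝ)) / (2 * (m : ℝ) - 1)) := by
    rcases le_total 1 (‖x‖ / s) with h | h
    · have := Real.rpow_le_rpow_of_exponent_le h ha
      rw [Real.rpow_one] at this
      linarith
    · have : 0 ≤ (‖x‖ / s) ^ ((2 * (m : ℝ)) / (2 * (m : ℝ) - 1)) := by positivity
      linarith
  gcongr
  nlinarith

lemma aux_cube_norm (n : ℕ) (hn : 1 ≤ n) (k : Fin n → ℤ) (x : EuclideanSpace ℝ (Fin n))
    (hx : x ∈ unitCube n k) : (∑ i, |(k i : ℝ)|) / n - 1 / 2 ≤ ‖x‖ := by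
  have hn' : (0 : ℝ) < n := by exact_mod_cast hn
  have : ∑ i, |(k i : ℝ)| ≤ ∑ i : Fin n, (‖x‖ + 1 / 2) := by
    refine Finset.sum_le_sum fun i _ => ?_
    have h1 := hx i
    have h2 : ‖x i‖ ≤ ‖x‖ := PiLp.norm_apply_le x i
    rw [Real.norm_eq_abs] at h2
    have h3 : |(k i : ℝ)| ≤ |x i| + |x i - k i| := by
      have := abs_sub (x i) (x i - k i)
      simpa using this
    linarith
  simp only [Finset.sum_const, Finset.card_univ, Fintype.card_fin, nsmul_eq_mul] at this
  rw [sub_le_iff_le_add, div_le_iff₀ hn']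
  linarith

lemma aux_vol (n : ℕ) (k : Fin n → ℤ) : volume (unitCube n k) ≤ 1 := by
  have h := (PiLp.volume_preserving_ofLp (Fin n)).measure_preimage_equiv (f := (MeasurableEquiv.toLp 2 (Fin n → ℝ)).symm)
    (Set.Icc (fun i => (k i : ℝ) - 1 / 2) (fun i => (k i : ℝ) + 1 / 2))
  have h2 : unitCube n k = (MeasurableEquiv.toLp 2 (Fin n → ℝ)).symm ⁻¹'
    (Set.Icc (fun i => (k i : ℝ) - 1 / 2) (fun i => (k i : ℝ) + 1 / 2)) := by
    ext x
    simp only [unitCube, Set.mem_setOf_eq, Set.mem_preimage, Set.mem_Icc, Pi.le_def, abs_le,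
      ← forall_and]
    refine forall_congr' fun i => ?_
    simp only [MeasurableEquiv.coe_toLp_symm]
    constructor <;> rintro ⟨h1, h2⟩ <;> constructor <;> linarith
  rw [h2, h, Real.volume_Icc_pi]
  simp
  norm_num

lemma aux_meas (n : ℕ) (k : Fin n → ℤ) : MeasurableSet (unitCube n k) := by
  have : unitCube n k = ⋂ i, {x | |x i - (k i : ℝ)| ≤ 1 / 2} := by
    ext x; simp [unitCube]
  rw [this]
  refine MeasurableSet.iInter fun i => ?_
  refine (IsClosed.measurableSet ?_)
  exact isClosed_le (by fun_prop) (by fun_prop)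

lemma aux_int (n : ℕ) (hn : 1 ≤ n) (d : ℝ) (hd : 0 < d) :
    Integrable (fun x : EuclideanSpace ℝ (Fin n) => Real.exp (-d * ‖x‖)) := by
  have : Nonempty (Fin n) := ⟨⟨0, hn⟩⟩
  rw [integrable_fun_norm_addHaar (f := fun r => Real.exp (-d * r)) volume]
  have h := integrableOn_rpow_mul_exp_neg_mul_rpow (p := 1) (s := ((n - 1 : ℕ) : ℝ)) (b := d)
    (by have : (0 : ℝ) ≤ ((n - 1 : ℕ) : ℝ) := by positivity
        linarith) one_pos hd
  simpa [Real.rpow_natCast] using h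

lemma aux_scale (n : ℕ) (hn : 1 ≤ n) (d : ℝ) (hd : 0 < d) (s : ℝ) (hs : 0 < s) :
    ∫⁻ x : EuclideanSpace ℝ (Fin n), ENNReal.ofReal (Real.exp (-d * (‖x‖ / s))) =
      ENNReal.ofReal (s ^ n * ∫ x : EuclideanSpace ℝ (Fin n), Real.exp (-d * ‖x‖)) := by
  have h1 := Measure.integral_comp_inv_smul_of_nonneg (volume)
    (fun x : EuclideanSpace ℝ (Fin n) => Real.exp (-d * ‖x‖)) hs.le
  have h2 := (aux_int n hn d hd).comp_smul (R := s⁻¹) (by positivity)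
  have h3 : ∀ x : EuclideanSpace ℝ (Fin n), ‖s⁻¹ • x‖ = ‖x‖ / s := by
    intro x
    rw [norm_smul, Real.norm_of_nonneg (by positivity)]
    ring
  simp only [h3] at h1 h2
  rw [← ofReal_integral_eq_lintegral_ofReal h2 (Filter.Eventually.of_forall fun x => by positivity),
    h1]
  simp

lemma aux_Lp (n : ℕ) (hn : 1 ≤ n) (d : ℝ) (hd : 0 < d) (p : ℝ≥0∞) (hp : 1 ≤ p) (s : ℝ)
    (hs : 0 < s) (k : Fin n → ℤ) :
    eLpNorm (fun x : EuclideanSpace ℝ (Fin n) => Real.exp (-d * (‖x‖ / s))) p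
      (volume.restrict (unitCube n k)) ≤
    ENNReal.ofReal ((min 1 (s ^ n * ∫ x : EuclideanSpace ℝ (Fin n), Real.exp (-d * ‖x‖))) ^
      (1 / p.toReal)) := by
  have hle1 : ∀ x : EuclideanSpace ℝ (Fin n), Real.exp (-d * (‖x‖ / s)) ≤ 1 := by
    intro x
    rw [Real.exp_le_one_iff]
    have : 0 ≤ d * (‖x‖ / s) := by positivity
    linarith
  have hK : 0 ≤ ∫ x : EuclideanSpace ℝ (Fin n), Real.exp (-d * ‖x‖) :=
    integral_nonneg fun x => by positivity
  by_cases hpt : p = ∞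
  · subst hpt
    simp only [ENNReal.toReal_top, div_zero, Real.rpow_zero, ENNReal.ofReal_one]
    rw [eLpNorm_exponent_top]
    refine eLpNormEssSup_le_of_ae_enorm_bound (Filter.Eventually.of_forall fun x => ?_)
    rw [Real.enorm_eq_ofReal (by positivity)]
    simpa using hle1 x
  have hp1 : 1 ≤ p.toReal := by
    simpa using ENNReal.toReal_mono hpt hp
  rw [eLpNorm_eq_lintegral_rpow_enorm_toReal (by positivity) hpt,
    ← ENNReal.ofReal_rpow_of_nonneg (by positivity) (by positivity)]
  refine ENNReal.rpow_le_rpow ?_ (by positivity)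
  have hb : ∀ x : EuclideanSpace ℝ (Fin n), ‖Real.exp (-d * (‖x‖ / s))‖ₑ ^ p.toReal ≤
      ENNReal.ofReal (Real.exp (-d * (‖x‖ / s))) := by
    intro x
    rw [Real.enorm_eq_ofReal (by positivity),
      ENNReal.ofReal_rpow_of_nonneg (by positivity) (by positivity)]
    refine ENNReal.ofReal_le_ofReal ?_
    exact Real.rpow_le_self_of_le_one (by positivity) (hle1 x) hp1
  refine (lintegral_mono hb).trans ?_
  rw [ENNReal.ofReal_min, le_min_iff]
  constructor
  · calc _ ≤ ∫⁻ x in unitCube n k, 1 := lintegral_mono fun x => by simpa using hle1 x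
      _ ≤ _ := by simpa using aux_vol n k
  · rw [← aux_scale n hn d hd s hs]
    exact setLIntegral_le_lintegral _ _

lemma aux_sum1 (β : ℝ) (hβ : 0 < β) (F : Finset ℤ) :
    ∑ j ∈ F, Real.exp (-β * |(j : ℝ)|) ≤ 2 * (1 + 1 / β) := by
  have hr0 : 0 ≤ Real.exp (-β) := by positivity
  have hr1 : Real.exp (-β) < 1 := by rw [Real.exp_lt_one_iff]; linarith
  have hg := hasSum_geometric_of_lt_one hr0 hr1
  have e1 : ∀ j : ℕ, Real.exp (-β) ^ j = Real.exp (-β * |((j : ℤ) : ℝ)|) := by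
    intro j
    rw [← Real.exp_nat_mul]
    congr 1
    simp [mul_comm]
  have e2 : ∀ j : ℕ, Real.exp (-β) * Real.exp (-β) ^ j
      = Real.exp (-β * |((-((j : ℤ) + 1) : ℤ) : ℝ)|) := by
    intro j
    rw [← Real.exp_nat_mul, ← Real.exp_add]
    congr 1
    push_cast
    rw [abs_neg, abs_of_nonneg (by positivity)]
    ring
  have h1 : HasSum (fun j : ℕ => Real.exp (-β * |((j : ℤ) : ℝ)|)) (1 - Real.exp (-β))⁻¹ := by
    simpa only [e1] using hg
  have h2 : HasSum (fun j : ℕ => Real.exp (-β * |((-((j : ℤ) + 1) : ℤ) : ℝ)|))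
      (Real.exp (-β) * (1 - Real.exp (-β))⁻¹) := by
    simpa only [e2] using hg.mul_left (Real.exp (-β))
  have h3 := HasSum.of_nat_of_neg_add_one (f := fun j : ℤ => Real.exp (-β * |(j : ℝ)|)) h1 h2
  refine (sum_le_hasSum F (fun _ _ => by positivity) h3).trans ?_
  have h4 : (1 - Real.exp (-β))⁻¹ ≤ 1 + 1 / β := by
    have h5 : Real.exp (-β) ≤ 1 / (1 + β) := by
      rw [Real.exp_neg, ← one_div]
      apply one_div_le_one_div_of_le (by positivity)
      linarith [Real.add_one_le_exp β]
    have h6 : β / (1 + β) ≤ 1 - Real.exp (-β) := by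
      have : β / (1 + β) = 1 - 1 / (1 + β) := by field_simp; ring
      linarith
    calc (1 - Real.exp (-β))⁻¹ ≤ (β / (1 + β))⁻¹ := by
          apply inv_anti₀ (by positivity) h6
      _ = 1 + 1 / β := by field_simp; ring
  have h7 : 0 < (1 - Real.exp (-β))⁻¹ := by
    apply inv_pos.2; linarith
  nlinarith

lemma aux_sumn (n : ℕ) (β : ℝ) (hβ : 0 < β) (u : Finset (Fin n → ℤ)) :
    ∑ k ∈ u, Real.exp (-β * ∑ i, |(k i : ℝ)|) ≤ (2 * (1 + 1 / β)) ^ n := by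
  classical
  have hsub : u ⊆ Fintype.piFinset (fun i : Fin n => u.image (fun k : Fin n → ℤ => k i)) := by
    intro k hk
    rw [Fintype.mem_piFinset]
    intro i
    exact Finset.mem_image_of_mem _ hk
  calc ∑ k ∈ u, Real.exp (-β * ∑ i, |(k i : ℝ)|)
      ≤ ∑ k ∈ Fintype.piFinset (fun i : Fin n => u.image (fun k : Fin n → ℤ => k i)),
        Real.exp (-β * ∑ i, |(k i : ℝ)|) :=
        Finset.sum_le_sum_of_subset_of_nonneg hsub fun _ _ _ => by positivity
    _ = ∏ i : Fin n, ∑ j ∈ u.image (fun k : Fin n → ℤ => k i), Real.exp (-β * |(j : ℝ)|) := by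
        rw [Finset.prod_univ_sum]
        refine Finset.sum_congr rfl fun k _ => ?_
        rw [← Real.exp_sum, Finset.mul_sum]
    _ ≤ ∏ i : Fin n, (2 * (1 + 1 / β)) :=
        Finset.prod_le_prod (fun _ _ => Finset.sum_nonneg fun _ _ => by positivity)
          fun i _ => aux_sum1 β hβ _
    _ = (2 * (1 + 1 / β)) ^ n := by simp

lemma aux_term (n m : ℕ) (hn : 1 ≤ n) (hm : 1 ≤ m) (c : ℝ) (hc : 0 < c)
    (p : ℝ≥0∞) (hp : 1 ≤ p) (t : ℝ) (ht : 0 < t) (σ : ℝ) (hσ : 1 ≤ σ)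
    (hσs : t ^ (1 / (2 * (m : ℝ))) ≤ σ) (k : Fin n → ℤ) :
    (eLpNorm (fun x => Gprof n m c t x) p (volume.restrict (unitCube n k))).toReal ≤
      ((t ^ ((n : ℝ) / (2 * (m : ℝ))))⁻¹ * Real.exp (2 * c) *
      (min 1 (t ^ ((n : ℝ) / (2 * (m : ℝ))) *
        ∫ x : EuclideanSpace ℝ (Fin n), Real.exp (-(c / 2) * ‖x‖))) ^ (1 / p.toReal)) *
      Real.exp (-(c / (2 * n * σ)) * ∑ i, |(k i : ℝ)|) := by
  have hn' : (0 : ℝ) < n := by exact_mod_cast hn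
  have hm' : (1 : ℝ) ≤ m := by exact_mod_cast hm
  have hs : 0 < t ^ (1 / (2 * (m : ℝ))) := Real.rpow_pos_of_pos ht _
  have hT : t ^ ((n : ℝ) / (2 * (m : ℝ))) = (t ^ (1 / (2 * (m : ℝ)))) ^ n := by
    rw [← Real.rpow_natCast, ← Real.rpow_mul ht.le]
    congr 1
    ring
  have hpt := aux_pt n m hm c hc t ht
  have hTpos : 0 < t ^ ((n : ℝ) / (2 * (m : ℝ))) := Real.rpow_pos_of_pos ht _
  have hL := aux_Lp n hn (c / 2) (by positivity) p hp _ hs k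
  rw [← hT] at hL
  have hK : 0 ≤ ∫ x : EuclideanSpace ℝ (Fin n), Real.exp (-(c / 2) * ‖x‖) :=
    integral_nonneg fun x => by positivity
  set K := ∫ x : EuclideanSpace ℝ (Fin n), Real.exp (-(c / 2) * ‖x‖)
  set T := t ^ ((n : ℝ) / (2 * (m : ℝ)))
  set s := t ^ (1 / (2 * (m : ℝ)))
  set E := Real.exp (-(c / (2 * n * σ)) * ∑ i, |(k i : ℝ)|) with hE
  have hbound : ∀ᵐ x ∂(volume.restrict (unitCube n k)), ‖Gprof n m c t x‖ ≤
      (T⁻¹ * Real.exp (2 * c) * E) * ‖Real.exp (-(c / 2) * (‖x‖ / s))‖ := by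
    refine (ae_restrict_iff' (aux_meas n k)).2 (Filter.Eventually.of_forall fun x hx => ?_)
    have h0 : 0 ≤ Gprof n m c t x := by
      unfold Gprof; positivity
    rw [Real.norm_of_nonneg h0, Real.norm_of_nonneg (by positivity)]
    refine (hpt x).trans ?_
    rw [hE, mul_assoc, mul_assoc, ← Real.exp_add, ← Real.exp_add, ← Real.exp_add]
    refine mul_le_mul_of_nonneg_left (Real.exp_le_exp.2 ?_) (by positivity)
    have hx' := aux_cube_norm n hn k x hx
    have h1 : ‖x‖ / σ ≤ ‖x‖ / s := by gcongr
    have h2 : ((∑ i, |(k i : ℝ)|) / n - 1 / 2) / σ ≤ ‖x‖ / σ := by gcongr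
    have h3 : (c / (2 * n * σ)) * ∑ i, |(k i : ℝ)| =
      c / 2 * (((∑ i, |(k i : ℝ)|) / n - 1 / 2) / σ) + c / 4 * (1 / σ) := by
      field_simp; ring
    have h4 : 1 / σ ≤ 1 := by rw [div_le_one (by positivity)]; exact hσ
    rw [neg_mul, neg_mul, neg_mul, h3]
    nlinarith
  have h5 := eLpNorm_le_mul_eLpNorm_of_ae_le_mul hbound p
  have h6 := h5.trans (mul_le_mul_right hL _)
  rw [← ENNReal.ofReal_mul (by positivity)] at h6
  refine (ENNReal.toReal_mono ENNReal.ofReal_ne_top h6).trans ?_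
  rw [ENNReal.toReal_ofReal (by positivity)]
  apply le_of_eq
  ring

/-- for `1 ≤ p ≤ ∞` and `c > 0` there is `C > 0`, depending only on `n`, `m`, `c`
and `p`, such that for every `t > 0`,
`Σ_{k∈ℤⁿ} ‖G_t‖_{L^p(C(k))} ≤ C (1 + t^{-(n/(2m))(1-1/p)})`.
(When `p = ∞`, `1 - 1/p.toReal = 1` by the Lean conventions `(∞).toReal = 0`, `1/0 = 0`.) -/
theorem gaussian_amalgam_bound (n m : ℕ) (hn : 1 ≤ n) (hm : 1 ≤ m) (c : ℝ) (hc : 0 < c)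
    (p : ℝ≥0∞) (hp : 1 ≤ p) :
    ∃ C > (0 : ℝ), ∀ t : ℝ, 0 < t →
      Summable (fun k : Fin n → ℤ =>
        (eLpNorm (fun x => Gprof n m c t x) p (volume.restrict (unitCube n k))).toReal) ∧
      ∑' k : Fin n → ℤ,
          (eLpNorm (fun x => Gprof n m c t x) p (volume.restrict (unitCube n k))).toReal ≤
        C * (1 + t ^ (-((n : ℝ) / (2 * (m : ℝ))) * (1 - 1 / p.toReal))) := by
  have hn' : (0 : ℝ) < n := by exact_mod_cast hn
  have hm' : (1 : ℝ) ≤ m := by exact_mod_cast hm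
  obtain ⟨K, hKdef⟩ : ∃ K, K = ∫ x : EuclideanSpace ℝ (Fin n), Real.exp (-(c / 2) * ‖x‖) := ⟨_, rfl⟩
  have hK : 0 ≤ K := hKdef ▸ integral_nonneg fun x => by positivity
  obtain ⟨B, hB⟩ : ∃ B, B = 2 * (1 + 2 * n / c) := ⟨_, rfl⟩
  have hBpos : 0 < B := by rw [hB]; positivity
  refine ⟨Real.exp (2 * c) * (1 + K) * B ^ n, by positivity, fun t ht => ?_⟩
  have hTpos : 0 < t ^ ((n : ℝ) / (2 * (m : ℝ))) := Real.rpow_pos_of_pos ht _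
  have hs : 0 < t ^ (1 / (2 * (m : ℝ))) := Real.rpow_pos_of_pos ht _
  have hT : t ^ ((n : ℝ) / (2 * (m : ℝ))) = (t ^ (1 / (2 * (m : ℝ)))) ^ n := by
    rw [← Real.rpow_natCast, ← Real.rpow_mul ht.le]
    congr 1
    ring
  have hrhs : t ^ (-((n : ℝ) / (2 * (m : ℝ))) * (1 - 1 / p.toReal)) =
      (t ^ ((n : ℝ) / (2 * (m : ℝ))))⁻¹ * (t ^ ((n : ℝ) / (2 * (m : ℝ)))) ^ (1 / p.toReal) := by
    rw [← Real.rpow_neg ht.le, ← Real.rpow_mul ht.le, ← Real.rpow_add ht]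
    congr 1
    ring
  have hq0 : 0 ≤ 1 / p.toReal := by positivity
  have hq1 : 1 / p.toReal ≤ 1 := by
    by_cases hpt : p = ∞
    · simp [hpt]
    · have hp1 : 1 ≤ p.toReal := by simpa using ENNReal.toReal_mono hpt hp
      rw [div_le_one (by positivity)]; exact hp1
  have hfin : ∀ u : Finset (Fin n → ℤ), ∑ k ∈ u,
      (eLpNorm (fun x => Gprof n m c t x) p (volume.restrict (unitCube n k))).toReal ≤
      Real.exp (2 * c) * (1 + K) * B ^ n *
        (1 + t ^ (-((n : ℝ) / (2 * (m : ℝ))) * (1 - 1 / p.toReal))) := by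
    intro u
    obtain ⟨σ, hσ⟩ : ∃ σ, σ = max 1 (t ^ (1 / (2 * (m : ℝ)))) := ⟨_, rfl⟩
    have hσ1 : 1 ≤ σ := hσ ▸ le_max_left _ _
    have hσs : t ^ (1 / (2 * (m : ℝ))) ≤ σ := hσ ▸ le_max_right _ _
    have h1 := Finset.sum_le_sum fun k (_ : k ∈ u) =>
      aux_term n m hn hm c hc p hp t ht σ hσ1 hσs k
    refine h1.trans ?_
    rw [← Finset.mul_sum, hrhs, ← hKdef]
    have h2 := aux_sumn n (c / (2 * n * σ)) (by positivity) u
    have h3 : (2 * (1 + 1 / (c / (2 * n * σ)))) ^ n ≤ (B * σ) ^ n := by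
      refine pow_le_pow_left₀ (by positivity) ?_ n
      have : 1 / (c / (2 * n * σ)) = 2 * n / c * σ := by field_simp
      rw [this, hB]
      nlinarith
    have h4 := h2.trans h3
    rw [mul_pow] at h4
    set T := t ^ ((n : ℝ) / (2 * (m : ℝ)))
    set s := t ^ (1 / (2 * (m : ℝ)))
    set q := 1 / p.toReal
    have hM : 0 ≤ (min 1 (T * K)) ^ q := by positivity
    refine (mul_le_mul_of_nonneg_left h4 (by positivity)).trans ?_
    suffices h : T⁻¹ * (min 1 (T * K)) ^ q * σ ^ n ≤ (1 + K) * (1 + T⁻¹ * T ^ q) by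
      calc _ = Real.exp (2 * c) * B ^ n * (T⁻¹ * (min 1 (T * K)) ^ q * σ ^ n) := by ring
        _ ≤ Real.exp (2 * c) * B ^ n * ((1 + K) * (1 + T⁻¹ * T ^ q)) := by gcongr
        _ = _ := by ring
    have hTq : 0 ≤ T⁻¹ * T ^ q := by positivity
    rcases le_total 1 s with hs1 | hs1
    · have : σ ^ n = T := by rw [hσ, max_eq_right hs1, hT]
      rw [this]
      have h5 : (min 1 (T * K)) ^ q ≤ 1 :=
        Real.rpow_le_one (by positivity) (min_le_left _ _) hq0
      have h6 : T⁻¹ * (min 1 (T * K)) ^ q * T = (min 1 (T * K)) ^ q := by field_simp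
      rw [h6]
      nlinarith
    · have : σ ^ n = 1 := by rw [hσ, max_eq_left hs1, one_pow]
      rw [this, mul_one]
      have h5 : (min 1 (T * K)) ^ q ≤ T ^ q * (1 + K) := by
        calc (min 1 (T * K)) ^ q ≤ (T * (1 + K)) ^ q := by
              refine Real.rpow_le_rpow (by positivity) ((min_le_right _ _).trans ?_) hq0
              gcongr; linarith
          _ = T ^ q * (1 + K) ^ q := Real.mul_rpow hTpos.le (by positivity)
          _ ≤ T ^ q * (1 + K) := by
              gcongr
              calc (1 + K) ^ q ≤ (1 + K) ^ (1 : ℝ) :=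
                    Real.rpow_le_rpow_of_exponent_le (by linarith) hq1
                _ = 1 + K := Real.rpow_one _
      calc T⁻¹ * (min 1 (T * K)) ^ q ≤ T⁻¹ * (T ^ q * (1 + K)) := by gcongr
        _ ≤ _ := by nlinarith
  have hnn : 0 ≤ fun k : Fin n → ℤ =>
    (eLpNorm (fun x => Gprof n m c t x) p (volume.restrict (unitCube n k))).toReal :=
    fun k => ENNReal.toReal_nonneg
  exact ⟨summable_of_sum_le hnn hfin, Real.tsum_le_of_sum_le hnn hfin⟩
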